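/- Let η, ε : F ⊣ U : B → A be an adjunction with F comonadic, G = (FU, ε, FηU) the induced comonad on B, and b₀ an object of B. Then the map Ψ_{F,b₀} : Sub_{A,F}(U(b₀)) → G-coalg(b₀), sending the class of a monomorphism i_a : a → U(b₀) with ξ_{i_a} = ε_{b₀} ∘ F(i_a) invertible to the coalgebra structure FU(ξ_{i_a}) ∘ F(η_a) ∘ ξ_{i_a}^{-1} : b₀ → FU(b₀), is a bijection. -/

import Mathlib

open CategoryTheory

/-- Given an adjunction `F ⊣ U`, an object `b₀` and a morphism `i : a ⟶ U(b₀)` such that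
`ξ_i := ε_{b₀} ∘ F(i)` is invertible, this is the morphism
`Ψ(i) = FU(ξ_i) ∘ F(η_a) ∘ ξ_i⁻¹ : b₀ ⟶ FU(b₀)`. -/
noncomputable def coalgStr {A : Type*} {B : Type*} [Category A] [Category B]
    (F : A ⥤ B) (U : B ⥤ A) (adj : F ⊣ U) {b₀ : B} {a : A}
    (i : a ⟶ U.obj b₀) (h : IsIso (F.map i ≫ adj.counit.app b₀)) :
    b₀ ⟶ F.obj (U.obj b₀) :=
  letI := h
  inv (F.map i ≫ adj.counit.app b₀) ≫ F.map (adj.unit.app a) ≫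
    F.map (U.map (F.map i ≫ adj.counit.app b₀))

lemma unit_xi {A : Type*} {B : Type*} [Category A] [Category B]
    {F : A ⥤ B} {U : B ⥤ A} (adj : F ⊣ U) {b₀ : B} {a : A} (i : a ⟶ U.obj b₀) :
    adj.unit.app a ≫ U.map (F.map i ≫ adj.counit.app b₀) = i := by
  simp

lemma coalgStr_eq_iff {A : Type*} {B : Type*} [Category A] [Category B]
    {F : A ⥤ B} {U : B ⥤ A} (adj : F ⊣ U) {b₀ : B} {a : A} (i : a ⟶ U.obj b₀)
    (h : IsIso (F.map i ≫ adj.counit.app b₀)) (θ : b₀ ⟶ F.obj (U.obj b₀)) :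
    coalgStr F U adj i h = θ ↔ F.map i = (F.map i ≫ adj.counit.app b₀) ≫ θ := by
  unfold coalgStr
  rw [← F.map_comp, unit_xi]
  exact IsIso.inv_comp_eq _

lemma coalgStr_mem {A : Type*} {B : Type*} [Category A] [Category B]
    {F : A ⥤ B} {U : B ⥤ A} (adj : F ⊣ U) {b₀ : B} {a : A} (i : a ⟶ U.obj b₀)
    (h : IsIso (F.map i ≫ adj.counit.app b₀)) (θ : b₀ ⟶ F.obj (U.obj b₀))
    (hθ : F.map i = (F.map i ≫ adj.counit.app b₀) ≫ θ) :
    θ ≫ adj.counit.app b₀ = 𝟙 b₀ ∧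
      θ ≫ F.map (adj.unit.app (U.obj b₀)) = θ ≫ F.map (U.map θ) := by
  constructor
  · rw [← cancel_epi (F.map i ≫ adj.counit.app b₀), ← Category.assoc, ← hθ]
    exact (Category.comp_id _).symm
  · rw [← cancel_epi (F.map i ≫ adj.counit.app b₀), ← Category.assoc, ← Category.assoc, ← hθ,
      ← F.map_comp, ← F.map_comp]
    congr 1
    have h1 := adj.unit.naturality i
    have h2 : i ≫ U.map θ = adj.unit.app a ≫ U.map (F.map i) := by
      conv_rhs => rw [hθ, U.map_comp, ← Category.assoc, unit_xi]
    rw [h2]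
    exact h1

lemma le_of_eq_str {A : Type*} {B : Type*} [Category A] [Category B]
    {F : A ⥤ B} {U : B ⥤ A} (adj : F ⊣ U)
    (hF : (Comonad.comparison adj).IsEquivalence) {b₀ : B} {a a' : A}
    (i : a ⟶ U.obj b₀) (j : a' ⟶ U.obj b₀)
    (hj : IsIso (F.map j ≫ adj.counit.app b₀)) (θ : b₀ ⟶ F.obj (U.obj b₀))
    (hi' : F.map i = (F.map i ≫ adj.counit.app b₀) ≫ θ)
    (hj' : F.map j = (F.map j ≫ adj.counit.app b₀) ≫ θ) :
    ∃ f : a ⟶ a', f ≫ j = i := by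
  let φ : F.obj a ⟶ F.obj a' :=
    (F.map i ≫ adj.counit.app b₀) ≫ inv (F.map j ≫ adj.counit.app b₀)
  have hφ : φ ≫ F.map j ≫ adj.counit.app b₀ = F.map i ≫ adj.counit.app b₀ := by simp [φ]
  have key : F.map (adj.unit.app a) ≫ F.map (U.map φ) = φ ≫ F.map (adj.unit.app a') := by
    rw [← cancel_mono (F.map (U.map (F.map j ≫ adj.counit.app b₀))), Category.assoc,
      Category.assoc, ← F.map_comp, ← F.map_comp, ← F.map_comp, ← U.map_comp, hφ, unit_xi,
      unit_xi, hj', ← Category.assoc, hφ, ← hi']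
  let g : (Comonad.comparison adj).obj a ⟶ (Comonad.comparison adj).obj a' :=
    { f := φ, h := key }
  obtain ⟨f, hf⟩ := (Comonad.comparison adj).map_surjective g
  have hf' : F.map f = φ := congrArg Comonad.Coalgebra.Hom.f hf
  refine ⟨f, ?_⟩
  rw [← unit_xi adj i, ← hφ, ← hf', ← unit_xi adj (f ≫ j), F.map_comp, Category.assoc]

lemma exists_sub {A : Type*} {B : Type*} [Category A] [Category B]
    {F : A ⥤ B} {U : B ⥤ A} (adj : F ⊣ U)
    (hF : (Comonad.comparison adj).IsEquivalence) {b₀ : B} (θ : b₀ ⟶ F.obj (U.obj b₀))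
    (h1 : θ ≫ adj.counit.app b₀ = 𝟙 b₀)
    (h2 : θ ≫ F.map (adj.unit.app (U.obj b₀)) = θ ≫ F.map (U.map θ)) :
    ∃ (a : A) (i : a ⟶ U.obj b₀), Mono i ∧ IsIso (F.map i ≫ adj.counit.app b₀) ∧
      F.map i = (F.map i ≫ adj.counit.app b₀) ≫ θ := by
  let X : adj.toComonad.Coalgebra := { A := b₀, a := θ, counit := h1, coassoc := h2 }
  let a := (Comonad.comparison adj).objPreimage X
  let e : (Comonad.comparison adj).obj a ≅ X := (Comonad.comparison adj).objObjPreimageIso X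
  let φ : F.obj a ≅ b₀ := adj.toComonad.forget.mapIso e
  have hφ : F.map (adj.unit.app a) ≫ F.map (U.map φ.hom) = φ.hom ≫ θ := e.hom.h
  have hx : F.map (adj.unit.app a ≫ U.map φ.hom) ≫ adj.counit.app b₀ = φ.hom := by simp
  have hθ : F.map (adj.unit.app a ≫ U.map φ.hom) =
      (F.map (adj.unit.app a ≫ U.map φ.hom) ≫ adj.counit.app b₀) ≫ θ := by
    rw [hx, F.map_comp, hφ]
  refine ⟨a, adj.unit.app a ≫ U.map φ.hom, ?_, ?_, hθ⟩
  · have : F.Faithful := Functor.Faithful.of_iso (Comonad.comparisonForget adj)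
    apply F.mono_of_mono_map
    rw [hθ, hx]
    have : Mono θ := (SplitMono.mk _ h1).mono
    infer_instance
  · rw [hx]; infer_instance

/-- Let `η, ε : F ⊣ U : B → A` be an adjunction with `F` comonadic (the
comparison functor into the Eilenberg–Moore category of coalgebras for the induced comonad
`G = (FU, ε, FηU)` is an equivalence), and let `b₀ ∈ B`.  Then the map
`Ψ_{F,b₀} : Sub_{A,F}(U(b₀)) → G-coalg(b₀)`, sending the class of a monomorphism
`i : a ⟶ U(b₀)` with `ξ_i = ε_{b₀} ∘ F(i)` invertible to the coalgebra structure
`FU(ξ_i) ∘ F(η_a) ∘ ξ_i⁻¹ : b₀ ⟶ FU(b₀)`, is a bijection. -/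
theorem stmt_6 {A : Type*} {B : Type*} [Category A] [Category B]
    {F : A ⥤ B} {U : B ⥤ A} (adj : F ⊣ U)
    (hF : (Comonad.comparison adj).IsEquivalence) (b₀ : B) :
    ∃ e : {P : Subobject (U.obj b₀) // IsIso (F.map P.arrow ≫ adj.counit.app b₀)} ≃
          {θ : b₀ ⟶ F.obj (U.obj b₀) //
            θ ≫ adj.counit.app b₀ = 𝟙 b₀ ∧
            θ ≫ F.map (adj.unit.app (U.obj b₀)) = θ ≫ F.map (U.map θ)},
      ∀ P, ((e P).1 : b₀ ⟶ F.obj (U.obj b₀)) = coalgStr F U adj P.1.arrow P.2 := by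
  let Ψ : {P : Subobject (U.obj b₀) // IsIso (F.map P.arrow ≫ adj.counit.app b₀)} →
      {θ : b₀ ⟶ F.obj (U.obj b₀) // θ ≫ adj.counit.app b₀ = 𝟙 b₀ ∧
        θ ≫ F.map (adj.unit.app (U.obj b₀)) = θ ≫ F.map (U.map θ)} := fun P =>
    ⟨coalgStr F U adj P.1.arrow P.2,
      coalgStr_mem adj _ P.2 _ ((coalgStr_eq_iff adj _ P.2 _).1 rfl)⟩
  refine ⟨Equiv.ofBijective Ψ ⟨?_, ?_⟩, fun P => rfl⟩
  · intro P Q hPQ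
    have h : coalgStr F U adj P.1.arrow P.2 = coalgStr F U adj Q.1.arrow Q.2 :=
      congrArg Subtype.val hPQ
    have hP := (coalgStr_eq_iff adj _ P.2 _).1 h
    have hQ := (coalgStr_eq_iff adj _ Q.2 _).1 rfl
    obtain ⟨f, hf⟩ := le_of_eq_str adj hF _ _ Q.2 _ hP hQ
    obtain ⟨g, hg⟩ := le_of_eq_str adj hF _ _ P.2 _ hQ hP
    exact Subtype.ext (le_antisymm (Subobject.le_of_comm f hf) (Subobject.le_of_comm g hg))
  · rintro ⟨θ, h1, h2⟩
    obtain ⟨a, i, hm, hi, hθ⟩ := exists_sub adj hF θ h1 h2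
    have hc : (Subobject.mk i).arrow = (Subobject.underlyingIso i).hom ≫ i := by simp
    have hP : IsIso (F.map (Subobject.mk i).arrow ≫ adj.counit.app b₀) := by
      rw [hc, F.map_comp, Category.assoc]; infer_instance
    refine ⟨⟨Subobject.mk i, hP⟩, Subtype.ext ((coalgStr_eq_iff adj _ hP _).2 ?_)⟩
    have hθ' : F.map i = F.map i ≫ adj.counit.app b₀ ≫ θ := hθ.trans (Category.assoc _ _ _)
    rw [hc, F.map_comp, Category.assoc, Category.assoc]
    exact congrArg (fun t => F.map (Subobject.underlyingIso i).hom ≫ t) hθ'
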